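/- If L ⊂ Z^s is a homogeneous lattice and α_1,…,α_{s−1} is a Z-basis of L, then deg S/I(L) = (s−1)!·vol(conv(0, α_1, …, α_{s−1})), where vol denotes the relative volume of the (s−1)-simplex conv(0, α_1, …, α_{s−1}) in R^s. -/

import Mathlib

open MvPolynomial

/-- The binomial `t^{a⁺} - t^{a⁻}` associated to an integer vector `a ∈ ℤ^s`,
where `a⁺` and `a⁻` are the positive and negative parts of `a`. -/
noncomputable def latticeBinomial (K : Type*) [Field K] {s : ℕ} (a : Fin s → ℤ) :
    MvPolynomial (Fin s) K :=
  (∏ i, X i ^ (a i).toNat) - ∏ i, X i ^ (-(a i)).toNat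

/-- The lattice ideal `I(L) = ({t^{a⁺} - t^{a⁻} : a ∈ L})` of a lattice `L ⊆ ℤ^s`. -/
noncomputable def latticeIdeal (K : Type*) [Field K] {s : ℕ} (L : AddSubgroup (Fin s → ℤ)) :
    Ideal (MvPolynomial (Fin s) K) :=
  Ideal.span {f | ∃ a ∈ L, f = latticeBinomial K a}

/-- The Hilbert function `H_I(d) = dim_K S_d / I_d` of `S/I`, where `S_d` is the space of
homogeneous polynomials of degree `d` (together with `0`) and `I_d = I ∩ S_d`. -/
noncomputable def hilbertFunction {K : Type*} [Field K] {s : ℕ}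
    (I : Ideal (MvPolynomial (Fin s) K)) (d : ℕ) : ℕ :=
  Module.finrank K
    (↥(homogeneousSubmodule (Fin s) K d) ⧸
      (Submodule.comap (homogeneousSubmodule (Fin s) K d).subtype (Submodule.restrictScalars K I)))

/-!
The lattice ideal of `L` is the kernel of the homomorphism `S → K[ℤ^s / L]`, `t^u ↦ [u]`, so the
Hilbert function at `d` counts the classes in `ℤ^s / L` of exponent vectors of degree `d`. If `L`
has finite index `m` in the hyperplane lattice `H : ∑ x_i = 0`, then for `d ≥ s * m` every class of
degree `d` contains a nonnegative vector, since `m H ⊆ L` allows all coordinates but one to be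
reduced modulo `m`. These classes form a coset of `H / L`, hence the Hilbert function is eventually
the index `[H : L]`, which is the absolute value of the determinant of a basis of `L` written in a
basis of `H`.
-/

section KernelOfMapDomain

open AddMonoidAlgebra

theorem ker_mapDomainLinearMap {R M N : Type*} [Ring R] (f : M → N) :
    LinearMap.ker (mapDomainLinearMap R R f) =
      Submodule.span R {x | ∃ a b, f a = f b ∧ x = single a 1 - single b 1} := by
  set D := Submodule.span R {x : R[M] | ∃ a b, f a = f b ∧ x = single a 1 - single b 1}
  apply le_antisymm
  · intro x hx
    rcases isEmpty_or_nonempty M with _ | _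
    · rw [show x = 0 by ext a; exact isEmptyElim a]
      exact zero_mem D
    -- Replacing each basis vector by a chosen representative of its fibre of `f` changes `y`
    -- only by differences along fibres, and the result depends on `y` through its image alone.
    have sub_mem (y : R[M]) :
        y - mapDomainLinearMap R R (Function.invFun f) (mapDomainLinearMap R R f y) ∈ D := by
      induction y using AddMonoidAlgebra.induction_linear with
      | zero => simp
      | add y z hy hz => simpa only [map_add, add_sub_add_comm] using add_mem hy hz
      | single a c =>
        have hD : single a (1 : R) - single (Function.invFun f (f a)) 1 ∈ D :=
          Submodule.subset_span ⟨a, _, (Function.invFun_eq ⟨a, rfl⟩).symm, rfl⟩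
        simpa [smul_sub] using D.smul_mem c hD
    simpa [LinearMap.mem_ker.1 hx] using sub_mem x
  · rw [Submodule.span_le]
    rintro _ ⟨a, b, hab, rfl⟩
    simp [hab]

end KernelOfMapDomain

section LatticeIdeal

variable (K : Type*) [Field K] {s : ℕ} (L : AddSubgroup (Fin s → ℤ))

/-- The class in `ℤ^s / L` of the exponent vector `u ∈ ℕ^s` of a monomial `t^u`. -/
noncomputable def exponentClass : (Fin s →₀ ℕ) →+ (Fin s → ℤ) ⧸ L :=
  (QuotientAddGroup.mk' L).comp
    (((Nat.castAddMonoidHom ℤ).compLeft (Fin s)).comp Finsupp.coeFnAddHom)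

/-- The `K`-algebra homomorphism `S → K[ℤ^s / L]` sending a monomial `t^u` to the basis vector of
the class of `u`; its kernel is `I(L)`. -/
noncomputable def latticeGroupAlgebraMap :
    MvPolynomial (Fin s) K →ₐ[K] AddMonoidAlgebra K ((Fin s → ℤ) ⧸ L) :=
  AddMonoidAlgebra.mapDomainAlgHom K K (exponentClass L)

variable {K L}

theorem exponentClass_eq_mk (u : Fin s →₀ ℕ) :
    exponentClass L u = QuotientAddGroup.mk (fun i => (u i : ℤ)) :=
  rfl

theorem exponentClass_eq_iff {u v : Fin s →₀ ℕ} :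
    exponentClass L u = exponentClass L v ↔ (fun i => (u i : ℤ) - v i) ∈ L := by
  rw [eq_comm, exponentClass_eq_mk, exponentClass_eq_mk, QuotientAddGroup.eq, neg_add_eq_sub]
  rfl

theorem latticeGroupAlgebraMap_monomial (u : Fin s →₀ ℕ) (c : K) :
    latticeGroupAlgebraMap K L (monomial u c) = AddMonoidAlgebra.single (exponentClass L u) c :=
  AddMonoidAlgebra.mapDomain_single

theorem latticeBinomial_eq_monomial_sub_monomial (a : Fin s → ℤ) :
    latticeBinomial K a =
      monomial (Finsupp.equivFunOnFinite.symm fun i => (a i).toNat) 1 -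
        monomial (Finsupp.equivFunOnFinite.symm fun i => (-a i).toNat) 1 := by
  simp [latticeBinomial, monomial_eq, Finsupp.prod_fintype]

theorem monomial_sub_monomial_mem_latticeIdeal {u v : Fin s →₀ ℕ}
    (h : exponentClass L u = exponentClass L v) :
    monomial u (1 : K) - monomial v 1 ∈ latticeIdeal K L := by
  have factor_inf : monomial u (1 : K) - monomial v 1 =
      monomial (u ⊓ v) 1 * latticeBinomial K (fun i => (u i : ℤ) - v i) := by
    rw [latticeBinomial_eq_monomial_sub_monomial, mul_sub, monomial_mul, monomial_mul, one_mul]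
    congr 3 <;> ext i <;> simp <;> omega
  rw [factor_inf]
  exact Ideal.mul_mem_left _ _ (Ideal.subset_span ⟨_, exponentClass_eq_iff.1 h, rfl⟩)

theorem latticeIdeal_eq_ker :
    latticeIdeal K L = RingHom.ker (latticeGroupAlgebraMap K L) := by
  apply le_antisymm
  · rw [latticeIdeal, Ideal.span_le]
    rintro _ ⟨a, ha, rfl⟩
    rw [SetLike.mem_coe, RingHom.mem_ker, latticeBinomial_eq_monomial_sub_monomial, map_sub,
      latticeGroupAlgebraMap_monomial, latticeGroupAlgebraMap_monomial, sub_eq_zero]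
    congr 1
    simpa [exponentClass_eq_iff] using ha
  · intro f hf
    have hf' : f ∈ LinearMap.ker (AddMonoidAlgebra.mapDomainLinearMap K K (exponentClass L)) := hf
    rw [ker_mapDomainLinearMap] at hf'
    refine (Submodule.span_le (p := (latticeIdeal K L).restrictScalars K)).2 ?_ hf'
    rintro _ ⟨u, v, huv, rfl⟩
    exact monomial_sub_monomial_mem_latticeIdeal huv

theorem map_homogeneousSubmodule_latticeGroupAlgebraMap (d : ℕ) :
    (homogeneousSubmodule (Fin s) K d).map (latticeGroupAlgebraMap K L).toLinearMap =
      AddMonoidAlgebra.supported K K (exponentClass L '' {u | u.degree = d}) := by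
  rw [homogeneousSubmodule_eq_finsupp_supported, AddMonoidAlgebra.supported_eq_span_single,
    AddMonoidAlgebra.supported_eq_span_single, Submodule.map_span, Set.image_image,
    Set.image_image]
  simp_rw [AlgHom.toLinearMap_apply, single_eq_monomial, latticeGroupAlgebraMap_monomial]

theorem hilbertFunction_latticeIdeal (d : ℕ) :
    hilbertFunction (latticeIdeal K L) d = (exponentClass L '' {u | u.degree = d}).ncard := by
  set φ := (latticeGroupAlgebraMap K L).toLinearMap
  set S_d := homogeneousSubmodule (Fin s) K d
  have ker_eq : Submodule.comap S_d.subtype ((latticeIdeal K L).restrictScalars K) =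
      LinearMap.ker (φ.domRestrict S_d) := by
    rw [latticeIdeal_eq_ker]
    rfl
  rw [hilbertFunction, ker_eq, (φ.domRestrict S_d).quotKerEquivRange.finrank_eq,
    LinearMap.range_domRestrict, map_homogeneousSubmodule_latticeGroupAlgebraMap,
    (AddMonoidAlgebra.supportedEquivFinsupp _).finrank_eq,
    Module.finrank_eq_nat_card_basis Finsupp.basisSingleOne, Nat.card_coe_set_eq]

end LatticeIdeal

section DegreeHyperplane

variable {ι : Type*} [Fintype ι]

/-- The coordinate sum `ℤ^ι → ℤ`. Its kernel is the hyperplane lattice `∑ x_i = 0`, and a lattice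
is homogeneous when it is contained in this kernel. -/
@[simps]
def coordSum (ι : Type*) [Fintype ι] : (ι → ℤ) →+ ℤ where
  toFun a := ∑ i, a i
  map_zero' := by simp
  map_add' a b := by simp [Finset.sum_add_distrib]

theorem mem_ker_coordSum {a : ι → ℤ} : a ∈ (coordSum ι).ker ↔ ∑ i, a i = 0 :=
  Iff.rfl

theorem exists_nonneg_add_zsmul_of_card_mul_le_coordSum [Nonempty ι] {m : ℤ} (hm : 0 < m)
    {w : ι → ℤ} (hw : Fintype.card ι * m ≤ coordSum ι w) :
    ∃ h ∈ (coordSum ι).ker, 0 ≤ w + m • h := by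
  classical
  -- The witness reduces every coordinate modulo `m` and puts the total carry on coordinate `i₀`.
  obtain ⟨i₀⟩ := ‹Nonempty ι›
  have sum_emod_le : ∑ i, w i % m ≤ Fintype.card ι * m := by
    simpa using Finset.sum_le_card_nsmul Finset.univ (fun i => w i % m) m
      fun i _ => (Int.emod_lt_of_pos (w i) hm).le
  have sum_decomp : ∑ i, w i = ∑ i, w i % m + m * ∑ i, w i / m := by
    rw [Finset.mul_sum, ← Finset.sum_add_distrib]
    exact Finset.sum_congr rfl fun i _ => (Int.emod_add_mul_ediv (w i) m).symm
  refine ⟨Pi.single i₀ (∑ i, w i / m) - fun i => w i / m, by simp, fun j => ?_⟩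
  have emod_nonneg := Int.emod_nonneg (w j) hm.ne'
  have decomp := Int.emod_add_mul_ediv (w j) m
  rcases eq_or_ne j i₀ with rfl | hj
  · suffices 0 ≤ w j + (m * ∑ i, w i / m - m * (w j / m)) by simpa [mul_sub] using this
    rw [coordSum_apply] at hw
    linarith
  · suffices m * (w j / m) ≤ w j by simpa [mul_sub, hj] using this
    linarith

end DegreeHyperplane

section DegreeOfLattice

variable {s : ℕ} {L : AddSubgroup (Fin s → ℤ)}

theorem sum_natCast_eq_degree (u : Fin s →₀ ℕ) : ∑ i, (u i : ℤ) = u.degree := by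
  rw [Finsupp.degree_eq_sum, Nat.cast_sum]

/-- The degree map `ℤ^s / L → ℤ` induced by the coordinate sum, for a homogeneous lattice `L`. -/
def quotientDegree (hL : L ≤ (coordSum (Fin s)).ker) : (Fin s → ℤ) ⧸ L →+ ℤ :=
  QuotientAddGroup.lift L (coordSum (Fin s)) hL

theorem quotientDegree_exponentClass (hL : L ≤ (coordSum (Fin s)).ker) (u : Fin s →₀ ℕ) :
    quotientDegree hL (exponentClass L u) = u.degree :=
  sum_natCast_eq_degree u

theorem natCard_ker_quotientDegree (hL : L ≤ (coordSum (Fin s)).ker) :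
    Nat.card (quotientDegree hL).ker = L.relIndex (coordSum (Fin s)).ker := by
  rw [quotientDegree, QuotientAddGroup.ker_lift, ← AddSubgroup.relIndex_ker,
    QuotientAddGroup.ker_mk']

theorem ncard_quotientDegree_preimage [NeZero s] (hL : L ≤ (coordSum (Fin s)).ker) (d : ℤ) :
    (quotientDegree hL ⁻¹' {d}).ncard = L.relIndex (coordSum (Fin s)).ker := by
  have quotientDegree_single :
      quotientDegree hL (QuotientAddGroup.mk (Pi.single 0 d)) = d := by
    simp [quotientDegree]
  rw [← natCard_ker_quotientDegree hL, ← Nat.card_coe_set_eq, ← quotientDegree_single]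
  exact Nat.card_congr ((quotientDegree hL).fiberEquivKer _)

theorem exists_exponentClass_eq_mk_of_nonneg {w : Fin s → ℤ} (hw : 0 ≤ w) :
    ∃ u : Fin s →₀ ℕ, exponentClass L u = QuotientAddGroup.mk w :=
  ⟨Finsupp.equivFunOnFinite.symm fun i => (w i).toNat, by
    rw [exponentClass_eq_mk]; congr; ext i; simpa using hw i⟩

theorem exponentClass_image_degree_eq [NeZero s] (hL : L ≤ (coordSum (Fin s)).ker)
    (hfin : L.relIndex (coordSum (Fin s)).ker ≠ 0) {d : ℕ}
    (hd : s * L.relIndex (coordSum (Fin s)).ker ≤ d) :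
    exponentClass L '' {u | u.degree = d} = quotientDegree hL ⁻¹' {(d : ℤ)} := by
  apply Set.Subset.antisymm
  · rintro _ ⟨u, rfl, rfl⟩
    exact quotientDegree_exponentClass hL u
  · intro g hg
    obtain ⟨w, rfl⟩ := QuotientAddGroup.mk_surjective g
    have sum_w : coordSum (Fin s) w = d := hg
    obtain ⟨h, hh, nonneg⟩ := exists_nonneg_add_zsmul_of_card_mul_le_coordSum
      (m := L.relIndex (coordSum (Fin s)).ker) (w := w) (by positivity)
      (by rw [sum_w, Fintype.card_fin]; exact_mod_cast hd)
    obtain ⟨u, hu⟩ := exists_exponentClass_eq_mk_of_nonneg (L := L) nonneg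
    have same_class : exponentClass L u = QuotientAddGroup.mk w := by
      rw [hu, eq_comm, QuotientAddGroup.eq, neg_add_cancel_left, natCast_zsmul]
      exact AddSubgroup.nsmul_relIndex_mem _ hh
    refine ⟨u, ?_, same_class⟩
    have := quotientDegree_exponentClass hL u
    rw [same_class] at this
    exact_mod_cast this.symm.trans hg

theorem hilbertFunction_latticeIdeal_eq_relIndex (K : Type*) [Field K] [NeZero s]
    (hL : L ≤ (coordSum (Fin s)).ker) (hfin : L.relIndex (coordSum (Fin s)).ker ≠ 0) {d : ℕ}
    (hd : s * L.relIndex (coordSum (Fin s)).ker ≤ d) :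
    hilbertFunction (latticeIdeal K L) d = L.relIndex (coordSum (Fin s)).ker := by
  rw [hilbertFunction_latticeIdeal, exponentClass_image_degree_eq hL hfin hd,
    ncard_quotientDegree_preimage]

end DegreeOfLattice

section Determinant

theorem det_ne_zero_of_linearIndependent {R M ι : Type*} [CommRing R] [IsDomain R]
    [AddCommGroup M] [Module R M] [Fintype ι] [DecidableEq ι] (b : Module.Basis ι R M)
    {v : ι → M} (hv : LinearIndependent R v) : b.det v ≠ 0 := by
  rw [b.det_apply]
  exact Matrix.nonsingular_iff_det_ne_zero.1 <| .of_linearIndependent_col <|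
    hv.map' b.equivFun.toLinearMap b.equivFun.ker

theorem relIndex_closure_range_eq_natAbs_det {E ι : Type*} [AddCommGroup E] [Fintype ι]
    [DecidableEq ι] {H : AddSubgroup E} (b : Module.Basis ι ℤ H.toIntSubmodule)
    {v : ι → H.toIntSubmodule} (hv : LinearIndependent ℤ v) :
    (AddSubgroup.closure (Set.range fun i => (v i : E))).relIndex H = (b.det v).natAbs := by
  have hv' : LinearIndependent ℤ fun i => (v i : E) := hv.map' _ (Submodule.ker_subtype _)
  have closure_le : AddSubgroup.closure (Set.range fun i => (v i : E)) ≤ H := by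
    rw [AddSubgroup.closure_le]
    rintro _ ⟨i, rfl⟩
    exact (v i).2
  rw [AddSubgroup.relIndex_eq_natAbs_det _ _ closure_le ((Module.Basis.span hv').map
    (LinearEquiv.ofEq _ _ (AddSubgroup.toIntSubmodule_closure _).symm)) b]
  congr 2
  ext i
  simp [Module.Basis.span_apply]

/-- The isomorphism from the hyperplane lattice `∑ x_i = 0` of `ℤ^(n+1)` to `ℤ^n` that forgets the
last coordinate; it gives the coordinates with respect to `e_1 - e_(n+1), …, e_n - e_(n+1)`. -/
def kerCoordSumEquiv (n : ℕ) :
    (coordSum (Fin (n + 1))).ker.toIntSubmodule ≃ₗ[ℤ] (Fin n → ℤ) where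
  toFun a j := a.1 j.castSucc
  invFun v := ⟨Fin.snoc v (-∑ j, v j), mem_ker_coordSum.2 (by simp [Fin.sum_univ_castSucc])⟩
  map_add' _ _ := rfl
  map_smul' _ _ := rfl
  left_inv a := by
    have sum_eq_zero : ∑ i, a.1 i = 0 := a.2
    rw [Fin.sum_univ_castSucc] at sum_eq_zero
    ext i
    refine Fin.lastCases ?_ (fun j => ?_) i
    · simpa using neg_eq_of_add_eq_zero_right sum_eq_zero
    · simp
  right_inv v := by ext j; simp

/-- The basis `e_1 - e_(n+1), …, e_n - e_(n+1)` of the hyperplane lattice `∑ x_i = 0` of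
`ℤ^(n+1)`. -/
noncomputable def kerCoordSumBasis (n : ℕ) :
    Module.Basis (Fin n) ℤ (coordSum (Fin (n + 1))).ker.toIntSubmodule :=
  .ofEquivFun (kerCoordSumEquiv n)

theorem det_kerCoordSumBasis {n : ℕ} (v : Fin n → (coordSum (Fin (n + 1))).ker.toIntSubmodule) :
    (kerCoordSumBasis n).det v = (Matrix.of fun i j => (v i).1 j.castSucc).det := by
  rw [Module.Basis.det_apply, ← Matrix.det_transpose]
  rfl

theorem det_castSucc_ne_zero_of_linearIndependent {n : ℕ} {α : Fin n → Fin (n + 1) → ℤ}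
    (hα : ∀ i, α i ∈ (coordSum (Fin (n + 1))).ker) (hli : LinearIndependent ℤ α) :
    (Matrix.of fun i j => α i (Fin.castSucc j)).det ≠ 0 := by
  have hv : LinearIndependent ℤ
      fun i => (⟨α i, hα i⟩ : (coordSum (Fin (n + 1))).ker.toIntSubmodule) :=
    .of_comp (Submodule.subtype _) hli
  simpa only [det_kerCoordSumBasis] using det_ne_zero_of_linearIndependent (kerCoordSumBasis n) hv

theorem relIndex_ker_coordSum_eq_natAbs_det {n : ℕ} {α : Fin n → Fin (n + 1) → ℤ}
    (hα : ∀ i, α i ∈ (coordSum (Fin (n + 1))).ker) (hli : LinearIndependent ℤ α) :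
    (AddSubgroup.closure (Set.range α)).relIndex (coordSum (Fin (n + 1))).ker =
      (Matrix.of fun i j => α i (Fin.castSucc j)).det.natAbs := by
  have hv : LinearIndependent ℤ
      fun i => (⟨α i, hα i⟩ : (coordSum (Fin (n + 1))).ker.toIntSubmodule) :=
    .of_comp (Submodule.subtype _) hli
  simpa only [det_kerCoordSumBasis] using
    relIndex_closure_range_eq_natAbs_det (kerCoordSumBasis n) hv

end Determinant

/-- Theorem: if `L ⊆ ℤ^s` is a homogeneous lattice and `α_1, …, α_{s-1}` is a `ℤ`-basis of `L`,
then `deg S/I(L) = (s-1)! · vol(conv(0, α_1, …, α_{s-1}))`, the normalized relative volume of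
the simplex `conv(0, α_1, …, α_{s-1})`.  Since each `α_i` lies in the hyperplane `∑ x_i = 0`,
this normalized relative volume is `|det M|`, where `M = (α_{i,j})_{1 ≤ i,j ≤ s-1}` is the
matrix expressing the `α_i` in the basis `e_1 - e_s, …, e_{s-1} - e_s`. -/
theorem degree_latticeIdeal_eq_normalized_relative_volume
    (K : Type*) [Field K] {s : ℕ} (hs : 0 < s)
    (L : AddSubgroup (Fin s → ℤ))
    (hhom : ∀ a ∈ L, ∑ i, a i = 0)
    (α : Fin (s - 1) → (Fin s → ℤ))
    (hgen : L = AddSubgroup.closure (Set.range α))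
    (hli : LinearIndependent ℤ α) :
    ∃ N : ℕ, ∀ d ≥ N, hilbertFunction (latticeIdeal K L) d =
      (Matrix.det (Matrix.of fun i j : Fin (s - 1) =>
        α i (Fin.castLE (Nat.sub_le s 1) j))).natAbs := by
  obtain ⟨n, rfl⟩ : ∃ n, s = n + 1 := Nat.exists_eq_add_one.2 hs
  have hα (i) : α i ∈ (coordSum (Fin (n + 1))).ker :=
    hhom _ (hgen.ge (AddSubgroup.subset_closure ⟨i, rfl⟩))
  have index_eq : L.relIndex (coordSum (Fin (n + 1))).ker =
      (Matrix.of fun i j : Fin n => α i j.castSucc).det.natAbs := by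
    rw [hgen]
    exact relIndex_ker_coordSum_eq_natAbs_det hα hli
  have index_ne_zero : L.relIndex (coordSum (Fin (n + 1))).ker ≠ 0 := by
    rw [index_eq, Int.natAbs_ne_zero]
    exact det_castSucc_ne_zero_of_linearIndependent hα hli
  exact ⟨_, fun d hd =>
    (hilbertFunction_latticeIdeal_eq_relIndex K hhom index_ne_zero hd).trans index_eq⟩
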